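/- The assignment (x,y,z) ↦ (x mod ℤ, y mod ℤ) descends to a well-defined continuous surjection q from the Heisenberg manifold H(ℝ)/H(ℤ) to the 2-torus (ℝ/ℤ) × (ℝ/ℤ), and q is a locally trivial fiber bundle with fiber the circle ℝ/ℤ: every point of (ℝ/ℤ) × (ℝ/ℤ) has an open neighborhood U together with a homeomorphism from q⁻¹(U) to U × (ℝ/ℤ) whose composite with the projection to U equals q. -/

import Mathlib

/-- The Heisenberg group over a commutative ring `R`: upper unitriangular `3 × 3` matrices,
identified with triples `(x, y, z)` with multiplication
`(a,b,c)·(a',b',c') = (a+a', b+b', c+c'+a·b')`. -/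
@[ext]
structure Heis (R : Type*) where
  /-- the `(1,2)` entry -/
  x : R
  /-- the `(2,3)` entry -/
  y : R
  /-- the `(1,3)` entry -/
  z : R

namespace Heis

variable {R : Type*} [CommRing R]

instance : Mul (Heis R) :=
  ⟨fun p q => ⟨p.x + q.x, p.y + q.y, p.z + q.z + p.x * q.y⟩⟩

instance : One (Heis R) := ⟨⟨0, 0, 0⟩⟩

instance : Inv (Heis R) := ⟨fun p => ⟨-p.x, -p.y, -p.z + p.x * p.y⟩⟩

@[simp] theorem mul_x (p q : Heis R) : (p * q).x = p.x + q.x := rfl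
@[simp] theorem mul_y (p q : Heis R) : (p * q).y = p.y + q.y := rfl
@[simp] theorem mul_z (p q : Heis R) : (p * q).z = p.z + q.z + p.x * q.y := rfl
@[simp] theorem one_x : (1 : Heis R).x = 0 := rfl
@[simp] theorem one_y : (1 : Heis R).y = 0 := rfl
@[simp] theorem one_z : (1 : Heis R).z = 0 := rfl
@[simp] theorem inv_x (p : Heis R) : p⁻¹.x = -p.x := rfl
@[simp] theorem inv_y (p : Heis R) : p⁻¹.y = -p.y := rfl
@[simp] theorem inv_z (p : Heis R) : p⁻¹.z = -p.z + p.x * p.y := rfl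

instance : Group (Heis R) where
  mul_assoc p q r := by ext <;> simp <;> ring
  one_mul p := by ext <;> simp
  mul_one p := by ext <;> simp
  inv_mul_cancel p := by ext <;> simp

end Heis

/-- `H(ℝ)` is topologized as `ℝ³`. -/
instance : TopologicalSpace (Heis ℝ) :=
  TopologicalSpace.induced (fun p => (p.x, p.y, p.z)) inferInstance

/-- The inclusion `H(ℤ) → H(ℝ)`. -/
def Heis.castHom : Heis ℤ →* Heis ℝ where
  toFun p := ⟨(p.x : ℝ), (p.y : ℝ), (p.z : ℝ)⟩
  map_one' := by ext <;> simp
  map_mul' p q := by ext <;> simp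

/-- The discrete Heisenberg group `H(ℤ)` as a subgroup of `H(ℝ)`. -/
def Heis.HZ : Subgroup (Heis ℝ) := Heis.castHom.range

/-- The Heisenberg manifold: the coset space of `H(ℝ)` by `H(ℤ)`, with the
quotient topology. -/
abbrev HeisMan : Type := Heis ℝ ⧸ Heis.HZ

/-!
Let `σ : ℝ/ℤ → ℝ` be a section of the quotient map which is continuous on an open set `V`. The
coset of `(x, y, z)` meets the surface `y = σ (y mod ℤ)`: acting by `(0, n, 0)` with
`n = σ (y mod ℤ) - y` gives `(x, σ (y mod ℤ), z + x * n)`. The remaining freedom, translation by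
elements `(a, 0, c)`, only changes `x` and `z` modulo `ℤ`, so `z + x * n` modulo `ℤ` is a fiber
coordinate over `ℝ/ℤ × V`.
-/

section AddCircle

variable {R : Type*} [Ring R]

theorem addCircle_coe_eq_coe_iff_exists_add_intCast {x y : R} :
    (x : AddCircle (1 : R)) = y ↔ ∃ n : ℤ, x + n = y := by
  simp only [QuotientAddGroup.eq, AddSubgroup.mem_zmultiples_iff, zsmul_one, eq_neg_add_iff_add_eq]

theorem addCircle_coe_add_intCast (x : R) (n : ℤ) :
    ((x + n : R) : AddCircle (1 : R)) = x :=
  (addCircle_coe_eq_coe_iff_exists_add_intCast.2 ⟨n, rfl⟩).symm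

theorem addCircle_exists_eq_add_intCast_of_rightInverse {σ : AddCircle (1 : R) → R}
    (hσ : Function.RightInverse σ ((↑) : R → AddCircle (1 : R))) (y : R) :
    ∃ n : ℤ, σ y = y + n := by
  obtain ⟨n, hn⟩ := addCircle_coe_eq_coe_iff_exists_add_intCast.1 (hσ y).symm
  exact ⟨n, hn.symm⟩

end AddCircle

instance addCircle_nontrivial {𝕜 : Type*} [AddCommGroup 𝕜] [LinearOrder 𝕜] [IsOrderedAddMonoid 𝕜]
    [Archimedean 𝕜] [DenselyOrdered 𝕜] {p : 𝕜} [hp : Fact (0 < p)] : Nontrivial (AddCircle p) := by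
  obtain ⟨a, ha0, hap⟩ := exists_between hp.out
  exact nontrivial_of_ne (a : AddCircle p) 0 fun h =>
    ha0.ne' ((AddCircle.coe_eq_zero_iff_of_mem_Ico ⟨ha0.le, hap⟩).1 h)

theorem addCircle_exists_rightInverse_continuousOn {𝕜 : Type*} [AddCommGroup 𝕜] [LinearOrder 𝕜]
    [IsOrderedAddMonoid 𝕜] [Archimedean 𝕜] [TopologicalSpace 𝕜] [OrderTopology 𝕜] {p : 𝕜}
    [Fact (0 < p)] [Nontrivial (AddCircle p)] (η : AddCircle p) :
    ∃ (σ : AddCircle p → 𝕜) (V : Set (AddCircle p)),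
      Function.RightInverse σ ((↑) : 𝕜 → AddCircle p) ∧ IsOpen V ∧ η ∈ V ∧ ContinuousOn σ V := by
  obtain ⟨ξ, hξ⟩ := exists_ne η
  obtain ⟨a, rfl⟩ := QuotientAddGroup.mk_surjective ξ
  refine ⟨fun t => AddCircle.equivIco p a t, {(a : AddCircle p)}ᶜ,
    fun _ => AddCircle.coe_equivIco, isOpen_compl_singleton, hξ.symm, fun t ht => ?_⟩
  exact (continuousAt_subtype_val.comp
    (AddCircle.continuousAt_equivIco p a ht)).continuousWithinAt

namespace Heis

theorem continuous_coords : Continuous fun p : Heis ℝ => (p.x, p.y, p.z) :=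
  continuous_induced_dom

theorem continuous_x : Continuous (x : Heis ℝ → ℝ) :=
  continuous_coords.fst

theorem continuous_y : Continuous (y : Heis ℝ → ℝ) :=
  continuous_coords.snd.fst

theorem continuous_z : Continuous (z : Heis ℝ → ℝ) :=
  continuous_coords.snd.snd

theorem continuous_mk : Continuous fun t : ℝ × ℝ × ℝ => (⟨t.1, t.2.1, t.2.2⟩ : Heis ℝ) :=
  continuous_induced_rng.2 continuous_id

@[simp] theorem castHom_x (g : Heis ℤ) : (castHom g).x = g.x := rfl
@[simp] theorem castHom_y (g : Heis ℤ) : (castHom g).y = g.y := rfl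
@[simp] theorem castHom_z (g : Heis ℤ) : (castHom g).z = g.z := rfl

end Heis

namespace HeisMan

open Heis

theorem mk_mul_castHom (p : Heis ℝ) (g : Heis ℤ) :
    (QuotientGroup.mk (p * castHom g) : HeisMan) = QuotientGroup.mk p :=
  QuotientGroup.mk_mul_of_mem p ⟨g, rfl⟩

/-- The map on the Heisenberg manifold induced by a function on `H(ℝ)` invariant under right
translation by `H(ℤ)`. -/
def lift {α : Type*} (f : Heis ℝ → α) (hf : ∀ p g, f (p * castHom g) = f p) : HeisMan → α :=
  Quotient.lift f fun p p' h => by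
    obtain ⟨g, hg⟩ := QuotientGroup.leftRel_apply.1 h
    rw [← hf p g, hg, mul_inv_cancel_left]

/-- The bundle projection `[x, y, z] ↦ (x mod ℤ, y mod ℤ)` from the Heisenberg manifold to the
2-torus. -/
def proj : HeisMan → AddCircle (1 : ℝ) × AddCircle (1 : ℝ) :=
  lift (fun p => (p.x, p.y)) fun p g => by
    simp only [mul_x, mul_y, castHom_x, castHom_y, addCircle_coe_add_intCast]

theorem proj_mk (p : Heis ℝ) :
    proj (QuotientGroup.mk p) = ((p.x : AddCircle (1 : ℝ)), (p.y : AddCircle (1 : ℝ))) :=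
  rfl

theorem continuous_proj : Continuous proj := by
  refine (QuotientGroup.isQuotientMap_mk HZ).continuous_iff.2 ?_
  exact ((AddCircle.continuous_mk' 1).comp continuous_x).prodMk
    ((AddCircle.continuous_mk' 1).comp continuous_y)

theorem proj_surjective : Function.Surjective proj := by
  rintro ⟨ξ, η⟩
  obtain ⟨x, rfl⟩ := QuotientAddGroup.mk_surjective ξ
  obtain ⟨y, rfl⟩ := QuotientAddGroup.mk_surjective η
  exact ⟨QuotientGroup.mk ⟨x, y, 0⟩, rfl⟩

/-- The map `(x mod ℤ, y, z mod ℤ) ↦ [x, y, z]`, through which the quotient map from `H(ℝ)` to the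
Heisenberg manifold factors. -/
def ofCylinder (t : AddCircle (1 : ℝ) × ℝ × AddCircle (1 : ℝ)) : HeisMan :=
  Quotient.liftOn₂' t.1 t.2.2 (fun x z => QuotientGroup.mk ⟨x, t.2.1, z⟩) fun x z x' z' hx hz => by
    obtain ⟨a, rfl⟩ := addCircle_coe_eq_coe_iff_exists_add_intCast.1 (Quotient.sound' hx)
    obtain ⟨c, rfl⟩ := addCircle_coe_eq_coe_iff_exists_add_intCast.1 (Quotient.sound' hz)
    rw [← mk_mul_castHom ⟨x, t.2.1, z⟩ ⟨a, 0, c⟩]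
    congr 1
    ext <;> simp

theorem ofCylinder_coe (x y z : ℝ) :
    ofCylinder ((x : AddCircle (1 : ℝ)), y, (z : AddCircle (1 : ℝ))) =
      QuotientGroup.mk ⟨x, y, z⟩ :=
  rfl

theorem continuous_ofCylinder : Continuous ofCylinder := by
  have quotient_coe : IsOpenQuotientMap ((↑) : ℝ → AddCircle (1 : ℝ)) :=
    QuotientAddGroup.isOpenQuotientMap_mk
  refine (quotient_coe.prodMap (IsOpenQuotientMap.id.prodMap quotient_coe)).continuous_comp_iff.1 ?_
  exact (QuotientGroup.isQuotientMap_mk HZ).continuous.comp continuous_mk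

section CircleSection

variable {σ : AddCircle (1 : ℝ) → ℝ}

theorem proj_ofCylinder_section
    (hσ : Function.RightInverse σ ((↑) : ℝ → AddCircle (1 : ℝ))) (ξ η ζ : AddCircle (1 : ℝ)) :
    proj (ofCylinder (ξ, σ η, ζ)) = (ξ, η) := by
  obtain ⟨x, rfl⟩ := QuotientAddGroup.mk_surjective ξ
  obtain ⟨z, rfl⟩ := QuotientAddGroup.mk_surjective ζ
  rw [ofCylinder_coe, proj_mk, hσ η]

variable (hσ : Function.RightInverse σ ((↑) : ℝ → AddCircle (1 : ℝ)))

/-- The fiber coordinate of `[x, y, z]` relative to a section `σ` of `ℝ → ℝ/ℤ`: the class modulo `ℤ`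
of the third coordinate of the representative obtained by moving `y` to `σ (y mod ℤ)`. The section
is defined on the whole circle, hence necessarily discontinuous somewhere. -/
def fiberCoord : HeisMan → AddCircle (1 : ℝ) :=
  lift (fun p => ((p.z + p.x * (σ p.y - p.y) : ℝ) : AddCircle (1 : ℝ))) fun p g => by
    obtain ⟨n, hn⟩ := addCircle_exists_eq_add_intCast_of_rightInverse hσ p.y
    rw [eq_comm, addCircle_coe_eq_coe_iff_exists_add_intCast]
    refine ⟨g.z + g.x * (n - g.y), ?_⟩
    simp only [mul_x, mul_y, mul_z, castHom_x, castHom_y, castHom_z, addCircle_coe_add_intCast, hn]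
    push_cast
    ring

theorem fiberCoord_mk (p : Heis ℝ) :
    fiberCoord hσ (QuotientGroup.mk p) =
      ((p.z + p.x * (σ p.y - p.y) : ℝ) : AddCircle (1 : ℝ)) :=
  rfl

theorem continuousOn_fiberCoord {V : Set (AddCircle (1 : ℝ))} (hV : IsOpen V)
    (hσV : ContinuousOn σ V) : ContinuousOn (fiberCoord hσ) (proj ⁻¹' (Set.univ ×ˢ V)) := by
  refine ((QuotientGroup.isQuotientMap_mk HZ).continuousOn_isOpen_iff
    ((isOpen_univ.prod hV).preimage continuous_proj)).2 ?_
  have continuousOn_section_y : ContinuousOn (fun p : Heis ℝ => σ p.y)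
      (QuotientGroup.mk ⁻¹' (proj ⁻¹' (Set.univ ×ˢ V))) :=
    hσV.comp ((AddCircle.continuous_mk' 1).comp continuous_y).continuousOn fun _ hp => hp.2
  exact (AddCircle.continuous_mk' 1).comp_continuousOn (continuous_z.continuousOn.add
    (continuous_x.continuousOn.mul (continuousOn_section_y.sub continuous_y.continuousOn)))

theorem ofCylinder_proj_fiberCoord (w : HeisMan) :
    ofCylinder ((proj w).1, σ (proj w).2, fiberCoord hσ w) = w := by
  obtain ⟨p, rfl⟩ := QuotientGroup.mk_surjective w
  obtain ⟨n, hn⟩ := addCircle_exists_eq_add_intCast_of_rightInverse hσ p.y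
  rw [proj_mk, fiberCoord_mk, ofCylinder_coe, ← mk_mul_castHom p ⟨0, n, 0⟩]
  congr 1
  ext <;> simp [hn]

theorem fiberCoord_ofCylinder_section (ξ η ζ : AddCircle (1 : ℝ)) :
    fiberCoord hσ (ofCylinder (ξ, σ η, ζ)) = ζ := by
  obtain ⟨x, rfl⟩ := QuotientAddGroup.mk_surjective ξ
  obtain ⟨z, rfl⟩ := QuotientAddGroup.mk_surjective ζ
  rw [ofCylinder_coe, fiberCoord_mk, hσ η, sub_self, mul_zero, add_zero]

/-- The local trivialization of the Heisenberg manifold over `ℝ/ℤ × V` determined by a section of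
`ℝ → ℝ/ℤ` that is continuous on the open set `V`. -/
def trivialization {V : Set (AddCircle (1 : ℝ))} (hV : IsOpen V) (hσV : ContinuousOn σ V) :
    Bundle.Trivialization (AddCircle (1 : ℝ)) proj where
  toFun w := (proj w, fiberCoord hσ w)
  invFun t := ofCylinder (t.1.1, σ t.1.2, t.2)
  source := proj ⁻¹' (Set.univ ×ˢ V)
  target := (Set.univ ×ˢ V) ×ˢ Set.univ
  baseSet := Set.univ ×ˢ V
  map_source' _ hw := ⟨hw, trivial⟩
  map_target' t ht := by
    rw [Set.mem_preimage, proj_ofCylinder_section hσ]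
    exact ht.1
  left_inv' w _ := ofCylinder_proj_fiberCoord hσ w
  right_inv' t _ :=
    Prod.ext (proj_ofCylinder_section hσ _ _ _) (fiberCoord_ofCylinder_section hσ _ _ _)
  open_source := (isOpen_univ.prod hV).preimage continuous_proj
  open_target := (isOpen_univ.prod hV).prod isOpen_univ
  open_baseSet := isOpen_univ.prod hV
  continuousOn_toFun := continuous_proj.continuousOn.prodMk (continuousOn_fiberCoord hσ hV hσV)
  continuousOn_invFun := by
    refine continuous_ofCylinder.comp_continuousOn
      (continuous_fst.fst.continuousOn.prodMk (ContinuousOn.prodMk ?_ continuous_snd.continuousOn))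
    exact hσV.comp continuous_fst.snd.continuousOn fun _ ht => ht.1.2
  source_eq := rfl
  target_eq := rfl
  proj_toFun _ _ := rfl

end CircleSection

theorem exists_trivialization_mem_baseSet (b : AddCircle (1 : ℝ) × AddCircle (1 : ℝ)) :
    ∃ e : Bundle.Trivialization (AddCircle (1 : ℝ)) proj, b ∈ e.baseSet := by
  obtain ⟨σ, V, hσ, hV, hbV, hσV⟩ := addCircle_exists_rightInverse_continuousOn b.2
  exact ⟨trivialization hσ hV hσV, trivial, hbV⟩

end HeisMan

/-- `(x,y,z) ↦ (x mod ℤ, y mod ℤ)` descends to a continuous surjection from the Heisenberg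
manifold `H(ℝ)/H(ℤ)` to the 2-torus, which is a locally trivial fiber bundle with fiber the
circle `ℝ/ℤ`. -/
theorem heisMan_circle_bundle_over_torus :
    ∃ q : HeisMan → AddCircle (1 : ℝ) × AddCircle (1 : ℝ),
      Continuous q ∧
      Function.Surjective q ∧
      (∀ p : Heis ℝ, q (QuotientGroup.mk p) =
        ((p.x : AddCircle (1 : ℝ)), (p.y : AddCircle (1 : ℝ)))) ∧
      ∀ b : AddCircle (1 : ℝ) × AddCircle (1 : ℝ),
        ∃ U : Set (AddCircle (1 : ℝ) × AddCircle (1 : ℝ)),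
          IsOpen U ∧ b ∈ U ∧
          ∃ e : (q ⁻¹' U) ≃ₜ U × AddCircle (1 : ℝ),
            ∀ w : q ⁻¹' U, ((e w).1 : AddCircle (1 : ℝ) × AddCircle (1 : ℝ)) = q w := by
  refine ⟨HeisMan.proj, HeisMan.continuous_proj, HeisMan.proj_surjective, HeisMan.proj_mk,
    fun b => ?_⟩
  obtain ⟨e, hb⟩ := HeisMan.exists_trivialization_mem_baseSet b
  refine ⟨e.baseSet, e.open_baseSet, hb, e.preimageHomeomorph subset_rfl, fun w => ?_⟩
  rw [e.preimageHomeomorph_apply]
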